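/- For every λ(x) ∈ B := {λ ∈ ℕ₀[x]* : λ is irreducible in ℤ[x]}, define A_λ := {f(x) ∈ ℤ[x] : λ(x)^k·f(x) ∈ ℕ₀[x]* for some k ∈ ℕ₀}. Then each A_λ contains ℕ₀[x]* and is closed under addition and multiplication, and ⋂_{λ ∈ B} A_λ = ℕ₀[x]*. -/

import Mathlib

open Polynomial

/-- `f ∈ ℕ₀[x]`: all coefficients of `f` are nonnegative. -/
def NNPoly (f : Polynomial ℤ) : Prop := ∀ n, 0 ≤ f.coeff n

/-- `f ∈ ℕ₀[x]* = ℕ₀[x] \ {0}`. -/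
def NNStar (f : Polynomial ℤ) : Prop := NNPoly f ∧ f ≠ 0

/-- `B`: the elements of `ℕ₀[x]*` that are irreducible in `ℤ[x]`. -/
def Bset : Set (Polynomial ℤ) := {l | NNStar l ∧ Irreducible l}

/-- `A_λ = {f ∈ ℤ[x] : λ^k·f ∈ ℕ₀[x]* for some k ∈ ℕ₀}`. -/
def Aset (l : Polynomial ℤ) : Set (Polynomial ℤ) := {f | ∃ k : ℕ, NNStar (l ^ k * f)}

theorem NNPoly.mul' {f g : Polynomial ℤ} (hf : NNPoly f) (hg : NNPoly g) : NNPoly (f * g) := by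
  intro n
  rw [coeff_mul]
  exact Finset.sum_nonneg fun p _ => mul_nonneg (hf _) (hg _)

theorem NNStar.mul' {f g : Polynomial ℤ} (hf : NNStar f) (hg : NNStar g) : NNStar (f * g) :=
  ⟨hf.1.mul' hg.1, mul_ne_zero hf.2 hg.2⟩

theorem NNStar.pow' {f : Polynomial ℤ} (hf : NNStar f) (k : ℕ) : NNStar (f ^ k) := by
  induction k with
  | zero =>
    refine ⟨fun n => ?_, by simp⟩
    rw [pow_zero, coeff_one]
    split_ifs <;> norm_num
  | succ k ih => rw [pow_succ]; exact ih.mul' hf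

theorem NNStar.add' {f g : Polynomial ℤ} (hf : NNStar f) (hg : NNStar g) : NNStar (f + g) := by
  refine ⟨fun n => by rw [coeff_add]; exact add_nonneg (hf.1 n) (hg.1 n), fun h => hf.2 ?_⟩
  ext n
  have h1 := congrArg (fun p => coeff p n) h
  have h2 := hf.1 n
  have h3 := hg.1 n
  simp only [coeff_add, coeff_zero] at h1 ⊢
  omega

/-- For every `λ ∈ B`, the set `A_λ` contains `ℕ₀[x]*` and is closed under addition and
multiplication, and `⋂_{λ ∈ B} A_λ = ℕ₀[x]*`. -/
theorem stmt12 :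
    (∀ l ∈ Bset,
      (∀ f, NNStar f → f ∈ Aset l) ∧
      (∀ f ∈ Aset l, ∀ g ∈ Aset l, f + g ∈ Aset l) ∧
      (∀ f ∈ Aset l, ∀ g ∈ Aset l, f * g ∈ Aset l)) ∧
    (⋂ l ∈ Bset, Aset l) = {f : Polynomial ℤ | NNStar f} := by
  refine ⟨fun l hl => ⟨fun f hf => ⟨0, by simpa using hf⟩, ?_, ?_⟩, ?_⟩
  · rintro f ⟨a, ha⟩ g ⟨b, hb⟩
    refine ⟨a + b, ?_⟩
    have e : l ^ (a + b) * (f + g) = l ^ b * (l ^ a * f) + l ^ a * (l ^ b * g) := by ring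
    rw [e]
    exact ((hl.1.pow' b).mul' ha).add' ((hl.1.pow' a).mul' hb)
  · rintro f ⟨a, ha⟩ g ⟨b, hb⟩
    refine ⟨a + b, ?_⟩
    have e : l ^ (a + b) * (f * g) = (l ^ a * f) * (l ^ b * g) := by ring
    rw [e]
    exact ha.mul' hb
  · ext f
    simp only [Set.mem_iInter, Set.mem_setOf_eq]
    constructor
    · intro h
      have hX : (X : Polynomial ℤ) ∈ Bset := by
        refine ⟨⟨fun n => ?_, X_ne_zero⟩, irreducible_X⟩
        rw [coeff_X]
        split_ifs <;> norm_num
      obtain ⟨k, hk⟩ := h X hX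
      refine ⟨fun n => ?_, right_ne_zero_of_mul hk.2⟩
      have := hk.1 (n + k)
      rwa [coeff_X_pow_mul] at this
    · intro hf l _
      exact ⟨0, by simpa using hf⟩
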